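/- arXiv:1910.11663 — 2 statements merged into one kernel-verified Lean document; each statement's English description precedes it below -/
import Mathlib

section
/- Let L/K be a finite extension of number fields and let q be a nonzero prime ideal of O_K. Then the exponent of q in the factorization of the relative discriminant ideal d_{L/K} (that is, the q-adic valuation ν_q(d_{L/K})) is at most [L:K]·[L:Q]. -/
/-!
Fix `N = [L : ℚ]`. At each prime `P` over `q` the different `D` satisfies
`ν_P(D) ≤ N · e(P | q)`. Otherwise `P ^ (N e)` divides `D`; take `x ≡ 1` modulo `P ^ (N e)` lying in
the complementary factor of `q ^ N 𝓞_L`. Then `Tr x ∈ q ^ N`. But `x` is idempotent modulo `q ^ N`,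
so over the local ring at `q` its trace is congruent to the rank `0 < r ≤ [L : K]` of the
direct summand it cuts out. Hence `r ∈ q ^ N`, and taking absolute norms gives `2 ^ [L : K] ≤ r`,
which is absurd. Comparing relative norms prime by prime,
`ν_q(N_{L/K} D) ≤ ν_q(N_{L/K} (q ^ N 𝓞_L)) = [L : K] · N`.
-/

open NumberField

open Module

section Idempotent

variable {R M : Type*} [CommRing R] [IsLocalRing R] [AddCommGroup M] [Module R M]
  [Module.Free R M] [Module.Finite R M]

lemma free_range_of_isIdempotentElem {f : M →ₗ[R] M} (hf : IsIdempotentElem f) :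
    Module.Free R f.range := by
  have : Module.Projective R f.range :=
    .of_split f.range.subtype f.rangeRestrict <| by
      ext ⟨_, y, rfl⟩
      exact LinearMap.congr_fun hf y
  exact Module.free_of_flat_of_isLocalRing

lemma trace_eq_finrank_range_of_isIdempotentElem {f : M →ₗ[R] M} (hf : IsIdempotentElem f) :
    LinearMap.trace R M f = finrank R f.range := by
  have hker : f.ker = (1 - f).range := LinearMap.IsIdempotentElem.ker_eq_range_one_sub hf
  have := free_range_of_isIdempotentElem hf
  have : Module.Free R f.ker := hker ▸ free_range_of_isIdempotentElem hf.one_sub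
  have : Module.Finite R f.ker := hker ▸ inferInstance
  exact (LinearMap.IsIdempotentElem.isProj_range f hf).trace

lemma finrank_range_pos_of_isIdempotentElem {f : M →ₗ[R] M} (hf : IsIdempotentElem f)
    (hf0 : f ≠ 0) : 0 < finrank R f.range := by
  have := free_range_of_isIdempotentElem hf
  rw [Nat.pos_iff_ne_zero, Ne, finrank_eq_zero_iff_of_free, Submodule.subsingleton_iff_eq_bot,
    LinearMap.range_eq_bot]
  exact hf0

end Idempotent

section Trace

open TensorProduct

lemma exists_trace_eq_natCast_of_isIdempotentElem {R S : Type*} [CommRing R] [IsLocalRing R]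
    [CommRing S] [Algebra R S] [Module.Free R S] [Module.Finite R S] {x : S}
    (hx : IsIdempotentElem x) (hx0 : x ≠ 0) :
    ∃ r : ℕ, 0 < r ∧ r ≤ finrank R S ∧ Algebra.trace R S x = r := by
  have hf : IsIdempotentElem (Algebra.lmul R S x) := hx.map (Algebra.lmul R S)
  have hf0 : Algebra.lmul R S x ≠ 0 := by
    rwa [Ne, map_eq_zero_iff _ Algebra.lmul_injective]
  exact ⟨_, finrank_range_pos_of_isIdempotentElem hf hf0, Submodule.finrank_le _,
    trace_eq_finrank_range_of_isIdempotentElem hf⟩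

lemma trace_one_tmul {R A S : Type*} [CommRing R] [CommRing A] [CommRing S] [Algebra R A]
    [Algebra R S] [Module.Free R S] [Module.Finite R S] (x : S) :
    Algebra.trace A (A ⊗[R] S) (1 ⊗ₜ x) = algebraMap R A (Algebra.trace R S x) := by
  rw [Algebra.trace_apply, Algebra.trace_apply, ← Algebra.baseChange_lmul,
    LinearMap.trace_baseChange]

lemma exists_trace_sub_natCast_mem {R S : Type*} [CommRing R] [IsLocalRing R] [CommRing S]
    [Algebra R S] [Module.Free R S] [Module.Finite R S] {I : Ideal R} {x : S}
    (hx : x * (1 - x) ∈ I.map (algebraMap R S)) (hxI : x ∉ I.map (algebraMap R S)) :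
    ∃ r : ℕ, 0 < r ∧ r ≤ finrank R S ∧ Algebra.trace R S x - r ∈ I := by
  have tmul_eq_zero_iff (y : S) : (1 : R ⧸ I) ⊗ₜ[R] y = 0 ↔ y ∈ I.map (algebraMap R S) := by
    rw [← Ideal.Quotient.eq_zero_iff_mem,
      ← (Algebra.TensorProduct.quotIdealMapEquivQuotTensor S I).map_eq_zero_iff]
    rfl
  have : Nontrivial (R ⧸ I) :=
    Ideal.Quotient.nontrivial_iff.2 fun hI ↦ hxI (by simp [hI, Ideal.map_top])
  have : IsLocalRing (R ⧸ I) := .of_surjective' _ Ideal.Quotient.mk_surjective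
  have idem : IsIdempotentElem ((1 : R ⧸ I) ⊗ₜ[R] x) := by
    rw [← tmul_eq_zero_iff, mul_sub, mul_one, TensorProduct.tmul_sub, sub_eq_zero] at hx
    rw [IsIdempotentElem, Algebra.TensorProduct.tmul_mul_tmul, one_mul, hx]
  obtain ⟨r, hr, hrn, htr⟩ :=
    exists_trace_eq_natCast_of_isIdempotentElem (R := R ⧸ I) idem (by rwa [Ne, tmul_eq_zero_iff])
  refine ⟨r, hr, by rwa [finrank_baseChange] at hrn, ?_⟩
  rw [← Ideal.Quotient.eq_zero_iff_mem, map_sub, map_natCast, ← htr, trace_one_tmul,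
    Ideal.Quotient.algebraMap_eq, sub_self]

end Trace

section IntTrace

variable {A B : Type*} [CommRing A] [CommRing B] [Algebra A B] {q : Ideal A} [q.IsMaximal]

lemma mem_map_pow_of_algebraMap_mul_mem {n : ℕ} {s : A} (hs : s ∉ q) {b : B}
    (h : algebraMap A B s * b ∈ (q ^ n).map (algebraMap A B)) :
    b ∈ (q ^ n).map (algebraMap A B) := by
  obtain ⟨c, i, hi, hc⟩ := Ideal.IsMaximal.exists_inv_pow q hs n
  have hb : b = algebraMap A B c * (algebraMap A B s * b) + algebraMap A B i * b := by
    rw [← mul_assoc, ← add_mul, ← map_mul, ← map_add, hc, map_one, one_mul]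
  rw [hb]
  exact add_mem (Ideal.mul_mem_left _ _ h) (Ideal.mul_mem_right _ _ (Ideal.mem_map_of_mem _ hi))

variable [IsDedekindDomain A] [IsDomain B] [IsIntegrallyClosed B] [Module.Finite A B]
  [IsTorsionFree A B]

lemma exists_intTrace_sub_natCast_mem_pow {n : ℕ} {x : B}
    (hx : x * (1 - x) ∈ (q ^ n).map (algebraMap A B)) (hxq : x ∉ (q ^ n).map (algebraMap A B)) :
    ∃ r : ℕ, 0 < r ∧ r ≤ finrank A B ∧ Algebra.intTrace A B x - r ∈ q ^ n := by
  let A' := Localization.AtPrime q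
  let B' := Localization (Algebra.algebraMapSubmonoid B q.primeCompl)
  have : IsIntegrallyClosed B' := isIntegrallyClosed_of_isLocalization B'
    (Algebra.algebraMapSubmonoid B q.primeCompl)
    (algebraMapSubmonoid_le_nonZeroDivisors_of_faithfulSMul B q.primeCompl_le_nonZeroDivisors)
  have : Module.Free A' B' := Module.free_of_finite_type_torsion_free'
  have map_localization : ((q ^ n).map (algebraMap A B)).map (algebraMap B B') =
      ((q ^ n).map (algebraMap A A')).map (algebraMap A' B') := by
    rw [Ideal.map_map, Ideal.map_map, ← IsScalarTower.algebraMap_eq, ← IsScalarTower.algebraMap_eq]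
  have mem_map_iff (y : B) : algebraMap B B' y ∈ ((q ^ n).map (algebraMap A A')).map
      (algebraMap A' B') ↔ y ∈ (q ^ n).map (algebraMap A B) := by
    rw [← map_localization]
    refine ⟨fun hy ↦ ?_, Ideal.mem_map_of_mem _⟩
    obtain ⟨_, ⟨s, hs, rfl⟩, hsy⟩ := (IsLocalization.algebraMap_mem_map_algebraMap_iff
      (Algebra.algebraMapSubmonoid B q.primeCompl) B' _ y).1 hy
    exact mem_map_pow_of_algebraMap_mul_mem hs hsy
  have finrank_eq : finrank A' B' = finrank A B := by
    rw [IsLocalization.finrank_eq A' q.primeCompl q.primeCompl_le_nonZeroDivisors,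
      IsLocalizedModule.finrank_eq q.primeCompl (IsScalarTower.toAlgHom A B B').toLinearMap
        q.primeCompl_le_nonZeroDivisors]
  obtain ⟨r, hr, hrn, htr⟩ := exists_trace_sub_natCast_mem (R := A')
    (by simpa using (mem_map_iff (x * (1 - x))).2 hx) (mt (mem_map_iff x).1 hxq)
  refine ⟨r, hr, finrank_eq ▸ hrn, ?_⟩
  rw [← Algebra.intTrace_eq_trace,
    ← Algebra.intTrace_eq_of_isLocalization A B q.primeCompl (Aₘ := A') (Bₘ := B'),
    ← map_natCast (algebraMap A A'), ← map_sub,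
    IsLocalization.algebraMap_mem_map_algebraMap_iff q.primeCompl] at htr
  obtain ⟨s, hs, hmul⟩ := htr
  exact (Ideal.IsMaximal.mul_mem_pow q hmul).resolve_left hs

end IntTrace

section Different

attribute [local instance] FractionRing.liftAlgebra

variable {A B : Type*} [CommRing A] [CommRing B] [Algebra A B] [IsDedekindDomain A]
  [IsDedekindDomain B] [Module.Finite A B] [IsTorsionFree A B]
  [Algebra.IsSeparable (FractionRing A) (FractionRing B)] {q : Ideal A} [q.IsMaximal]

lemma not_dvd_differentIdeal_of_natCast_notMem_pow {n : ℕ}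
    (hn : ∀ r : ℕ, 0 < r → r ≤ finrank A B → (r : A) ∉ q ^ n) {I J : Ideal B} (hI : I ≠ ⊤)
    (hIJ : IsCoprime I J) (hmul : I * J = (q ^ n).map (algebraMap A B)) :
    ¬ I ∣ differentIdeal A B := by
  obtain ⟨y, hy, x, hx, hyx⟩ := Ideal.isCoprime_iff_exists.1 hIJ
  have hx_idem : x * (1 - x) ∈ (q ^ n).map (algebraMap A B) := by
    rw [← hmul, ← eq_sub_of_add_eq hyx, mul_comm x]
    exact Ideal.mul_mem_mul hy hx
  have hx_notMem : x ∉ (q ^ n).map (algebraMap A B) := fun h ↦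
    hI <| (Ideal.eq_top_iff_one I).2 <| hyx ▸ add_mem hy (Ideal.mul_le_left (hmul ▸ h))
  obtain ⟨r, hr, hrn, htr⟩ := exists_intTrace_sub_natCast_mem_pow hx_idem hx_notMem
  refine not_dvd_differentIdeal_of_intTrace_not_mem A I J hmul x hx fun h ↦ hn r hr hrn ?_
  simpa using sub_mem h htr

lemma emultiplicity_differentIdeal_le_emultiplicity_map {n : ℕ}
    (hn : ∀ r : ℕ, 0 < r → r ≤ finrank A B → (r : A) ∉ q ^ n) {P : Ideal B} [P.IsPrime]
    [P.LiesOver q] :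
    emultiplicity P (differentIdeal A B) ≤ emultiplicity P ((q ^ n).map (algebraMap A B)) := by
  have : P.IsMaximal := .of_liesOver_isMaximal P q
  have hn0 : n ≠ 0 := by
    rintro rfl
    exact hn 1 one_pos finrank_pos (by simp)
  have hPdvd : P ∣ (q ^ n).map (algebraMap A B) := by
    rw [Ideal.map_pow]
    exact dvd_pow (Ideal.dvd_iff_le.2 (Ideal.map_le_of_le_comap (P.over_def q).le)) hn0
  by_contra! hlt
  have hfin : FiniteMultiplicity P ((q ^ n).map (algebraMap A B)) :=
    finiteMultiplicity_iff_emultiplicity_ne_top.2 hlt.ne_top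
  obtain ⟨J, hJ, hPJ⟩ := hfin.exists_eq_pow_mul_and_not_dvd
  have hcop : IsCoprime P J := by
    rwa [Ideal.isCoprime_iff_codisjoint, ← this.out.not_le_iff_codisjoint, ← Ideal.dvd_iff_le]
  refine not_dvd_differentIdeal_of_natCast_notMem_pow hn ?_ hcop.pow_left hJ.symm
    (pow_dvd_of_le_emultiplicity (hfin.emultiplicity_eq_multiplicity ▸ hlt.le))
  have hm0 : multiplicity P ((q ^ n).map (algebraMap A B)) ≠ 0 :=
    multiplicity_ne_zero.2 hPdvd
  exact ne_top_of_le_ne_top ‹P.IsPrime›.ne_top (Ideal.pow_le_self hm0)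

end Different

section RelNorm

variable {A B : Type*} [CommRing A] [CommRing B] [Algebra A B] [IsDedekindDomain A]
  [IsDedekindDomain B] [Module.Finite A B] [IsTorsionFree A B] {q : Ideal A}

lemma liesOver_of_dvd_relNorm (hq : Prime q) {P : Ideal B} (hP : Prime P)
    (h : q ∣ Ideal.relNorm A P) : P.LiesOver q := by
  have := Ideal.isPrime_of_prime hP
  obtain ⟨s, hs⟩ := Ideal.exists_relNorm_eq_pow_of_isPrime P (P.under A)
  have hle : P.under A ≤ q := Ideal.dvd_iff_le.1 (hq.dvd_of_dvd_pow (hs ▸ h))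
  have hne : P.under A ≠ ⊥ := Ideal.IsIntegral.comap_ne_bot _ hP.ne_zero
  have : (P.under A).IsMaximal := Ideal.IsPrime.isMaximal inferInstance hne
  exact ⟨(this.eq_of_le (Ideal.isPrime_of_prime hq).ne_top hle).symm⟩

lemma emultiplicity_relNorm_mono (hq : Prime q) {I J : Ideal B} (hI : I ≠ 0)
    (h : ∀ P : Ideal B, Prime P → P.LiesOver q → emultiplicity P I ≤ emultiplicity P J) :
    emultiplicity q (Ideal.relNorm A I) ≤ emultiplicity q (Ideal.relNorm A J) := by
  induction I using UniqueFactorizationMonoid.induction_on_prime generalizing J with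
  | h₁ => exact absurd rfl hI
  | h₂ I hunit =>
    rw [emultiplicity_of_isUnit_right hq.not_isUnit (hunit.map (Ideal.relNorm A))]
    exact zero_le
  | h₃ I P hI0 hP ih =>
    by_cases hPq : P.LiesOver q
    · have hPJ : P ∣ J := by
        rw [← emultiplicity_ne_zero]
        exact ((emultiplicity_ne_zero.2 (dvd_mul_right P I)).bot_lt.trans_le (h P hP hPq)).ne'
      obtain ⟨J, rfl⟩ := hPJ
      rw [map_mul, map_mul, emultiplicity_mul hq, emultiplicity_mul hq]
      gcongr
      refine ih hI0 fun P' hP' hP'q ↦ ?_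
      have := h P' hP' hP'q
      rwa [emultiplicity_mul hP', emultiplicity_mul hP', ENat.add_le_add_iff_left] at this
      exact finiteMultiplicity_iff_emultiplicity_ne_top.1 (.of_prime_left hP' hP.ne_zero)
    · rw [map_mul, emultiplicity_mul hq,
        emultiplicity_eq_zero.2 (mt (liesOver_of_dvd_relNorm hq hP) hPq), zero_add]
      exact ih hI0 fun P' hP' hP'q ↦
        (emultiplicity_le_emultiplicity_of_dvd_right (dvd_mul_left I P)).trans (h P' hP' hP'q)

attribute [local instance] FractionRing.liftAlgebra in
lemma emultiplicity_relNorm_differentIdeal_le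
    [Algebra.IsSeparable (FractionRing A) (FractionRing B)] (hq : Prime q) {n : ℕ}
    (hn : ∀ r : ℕ, 0 < r → r ≤ finrank A B → (r : A) ∉ q ^ n) :
    emultiplicity q (Ideal.relNorm A (differentIdeal A B)) ≤ (finrank A B * n : ℕ) :=
  calc emultiplicity q (Ideal.relNorm A (differentIdeal A B))
      ≤ emultiplicity q (Ideal.relNorm A ((q ^ n).map (algebraMap A B))) :=
        emultiplicity_relNorm_mono hq differentIdeal_ne_bot fun P hP _ ↦
          have := Ideal.isPrime_of_prime hP
          have := (Ideal.isPrime_of_prime hq).isMaximal hq.ne_zero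
          emultiplicity_differentIdeal_le_emultiplicity_map hn
    _ = (finrank A B * n : ℕ) := by
        rw [Ideal.relNorm_algebraMap, ← pow_mul, mul_comm,
          emultiplicity_pow_self hq.ne_zero hq.not_isUnit]

end RelNorm

section AbsNorm

variable {A : Type*} [CommRing A] [IsDedekindDomain A] [Module.Free ℤ A] [Module.Finite ℤ A]

lemma absNorm_pow_dvd_of_natCast_mem_pow {q : Ideal A} {n r : ℕ}
    (h : (r : A) ∈ q ^ (n * finrank ℤ A)) : Ideal.absNorm q ^ n ∣ r := by
  have := Ideal.absNorm_dvd_absNorm_of_le ((Ideal.span_singleton_le_iff_mem _).2 h)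
  rwa [Ideal.absNorm_span_natCast, map_pow, pow_mul, Nat.pow_dvd_pow_iff finrank_pos.ne'] at this

lemma natCast_notMem_pow_mul_finrank {q : Ideal A} (hq : q ≠ ⊤) {n r : ℕ} (hr : 0 < r)
    (hrn : r ≤ n) : (r : A) ∉ q ^ (n * finrank ℤ A) := fun h ↦ by
  have hdvd := absNorm_pow_dvd_of_natCast_mem_pow h
  have hpos : 0 < Ideal.absNorm q :=
    (pow_pos_iff (by lia)).1 (Nat.pos_of_dvd_of_pos hdvd hr)
  have hne_one : Ideal.absNorm q ≠ 1 := mt Ideal.absNorm_eq_one_iff.1 hq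
  have : 2 ^ n ≤ n := calc
    2 ^ n ≤ Ideal.absNorm q ^ n := Nat.pow_le_pow_left (by lia) n
    _ ≤ r := Nat.le_of_dvd hr hdvd
    _ ≤ n := hrn
  exact this.not_gt Nat.lt_two_pow_self

end AbsNorm

/-- for a finite extension `L/K` of number fields and a nonzero prime
ideal `q` of `𝓞 K`, the exponent of `q` in the factorization of the relative
discriminant ideal `d_{L/K} = N_{L/K}(differentIdeal)` is at most `[L:K]·[L:ℚ]`. -/
theorem multiplicity_relativeDiscriminant_le
    (K L : Type*) [Field K] [Field L] [NumberField K] [NumberField L] [Algebra K L]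
    (q : Ideal (𝓞 K)) (hq0 : q ≠ ⊥) (hq : q.IsPrime) :
    emultiplicity q (Ideal.spanNorm (𝓞 K) (differentIdeal (𝓞 K) (𝓞 L)))
      ≤ (Module.finrank K L * Module.finrank ℚ L : ℕ) := by
  have hfinrank : finrank (𝓞 K) (𝓞 L) = finrank K L :=
    (IsFractionRing.finrank_eq (𝓞 K) K (𝓞 L) L).symm
  rw [Ideal.spanNorm_eq, ← hfinrank]
  refine emultiplicity_relNorm_differentIdeal_le (Ideal.prime_of_isPrime hq0 hq)
    fun r hr hrn ↦ ?_
  rw [← finrank_mul_finrank ℚ K L, mul_comm, ← hfinrank, ← RingOfIntegers.rank K]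
  exact natCast_notMem_pow_mul_finrank hq.ne_top hr hrn
end

section
/- Let p ≥ 11 be an integer and let d, s be positive integers with d ≤ 2s, and let D, P be real numbers with D ≥ 1 and P ≥ (log 2)^s. Set D* = p^{d²(p-1)³/8}·D^{(p-1)/2} and Δ(p) = ((2p)^{dp(p-1)}·(D*)^{p-1})^{1/2} · (log((2p)^{dp(p-1)}·(D*)^{p-1}))^{d(p-1)²/2} · P^{(p-1)²/2}. Then Δ(p) ≤ e^{7s²p⁴·log p} · ((d²·log(D+1))^d · D · P)^{p²}. -/
/-!
Write `q = p - 1` and let `A` be the logarithm of `(2p)^{dpq}·(D*)^q`, so that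
`log Δ(p) = A/2 + (d q²/2)·log A + (q²/2)·log P`, where `A` is linear in `log p` and `log D`.
Inside the outer logarithm the crude bound `A ≤ d² log(D+1)·p⁶` suffices: it produces the factor
`d² log(D+1)` of the target and costs only `3 d q² log p`. It remains to raise the exponent `q²/2`
of `(d² log(D+1))^d·P` to `p²`. This quantity may be less than `1`, but the bound
`log log 2 ≥ -log 2` keeps its logarithm above `-(d + s) log 2`, and the loss is absorbed by
`7 s² p⁴ log p`.
-/

section

open Real

variable {p d s D P : ℝ}

/-- The quantity `D*` attached to `p`, for a number field of degree `d` and absolute discriminant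
`D`; all parameters are taken real. -/
noncomputable def discrStar (p d D : ℝ) : ℝ :=
  p ^ (d ^ 2 * (p - 1) ^ 3 / 8) * D ^ ((p - 1) / 2)

/-- The quantity `(2p)^{dp(p-1)}·(D*)^{p-1}`, whose square root and logarithm both enter `Δ(p)`. -/
noncomputable def discrBound (p d D : ℝ) : ℝ :=
  (2 * p) ^ (d * p * (p - 1)) * discrStar p d D ^ (p - 1)

/-- The quantity `Δ(p)`; `P` is the product of the logarithms of the norms of the finite places
in `S`. -/
noncomputable def delta (p d D P : ℝ) : ℝ :=
  discrBound p d D ^ ((1 : ℝ) / 2) * log (discrBound p d D) ^ (d * (p - 1) ^ 2 / 2) *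
    P ^ ((p - 1) ^ 2 / 2)

lemma neg_log_two_le_log_log_two : -log 2 ≤ log (log 2) := by
  rw [← log_inv]
  exact log_le_log (by norm_num) (by linarith [log_two_gt_d9])

lemma neg_mul_log_two_le_log_of_rpow_le (hs : 0 ≤ s) (hP : log 2 ^ s ≤ P) :
    -(s * log 2) ≤ log P :=
  calc -(s * log 2) = s * -log 2 := by ring
    _ ≤ s * log (log 2) := by gcongr; exact neg_log_two_le_log_log_two
    _ = log (log 2 ^ s) := (log_rpow (log_pos one_lt_two) s).symm
    _ ≤ log P := log_le_log (rpow_pos_of_pos (log_pos one_lt_two) s) hP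

lemma log_two_le_log_add_one (hD : 1 ≤ D) : log 2 ≤ log (D + 1) :=
  log_le_log two_pos (by linarith)

lemma sq_mul_log_add_one_pos (hd : 1 ≤ d) (hD : 1 ≤ D) : 0 < d ^ 2 * log (D + 1) := by
  have : 0 < log (D + 1) := log_pos (by linarith)
  positivity

lemma neg_log_two_le_log_sq_mul_log_add_one (hd : 1 ≤ d) (hD : 1 ≤ D) :
    -log 2 ≤ log (d ^ 2 * log (D + 1)) := by
  have hM : log 2 ≤ d ^ 2 * log (D + 1) :=
    (log_two_le_log_add_one hD).trans
      (le_mul_of_one_le_left (log_nonneg (by linarith)) (one_le_pow₀ hd))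
  exact neg_log_two_le_log_log_two.trans (log_le_log (log_pos one_lt_two) hM)

lemma discrStar_pos (hp : 0 < p) (hD : 0 < D) : 0 < discrStar p d D := by
  unfold discrStar; positivity

lemma discrBound_pos (hp : 0 < p) (hD : 0 < D) : 0 < discrBound p d D := by
  have := discrStar_pos (d := d) hp hD
  unfold discrBound; positivity

lemma log_discrStar (hp : 0 < p) (hD : 0 < D) :
    log (discrStar p d D) = d ^ 2 * (p - 1) ^ 3 / 8 * log p + (p - 1) / 2 * log D := by
  rw [discrStar, log_mul (by positivity) (by positivity), log_rpow hp, log_rpow hD]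

lemma log_discrBound (hp : 0 < p) (hD : 0 < D) :
    log (discrBound p d D) = d * p * (p - 1) * (log 2 + log p) +
      d ^ 2 * (p - 1) ^ 4 / 8 * log p + (p - 1) ^ 2 / 2 * log D := by
  have hstar := discrStar_pos (d := d) hp hD
  rw [discrBound, log_mul (by positivity) (by positivity), log_rpow (by positivity),
    log_rpow hstar, log_discrStar hp hD, log_mul two_ne_zero hp.ne']
  ring

lemma log_discrBound_pos (hp : 1 < p) (hd : 0 < d) (hD : 1 ≤ D) :
    0 < log (discrBound p d D) := by
  have : 0 < p - 1 := by linarith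
  have hL : 0 < log p := log_pos hp
  have hl : 0 ≤ log D := log_nonneg hD
  rw [log_discrBound (by linarith) (by linarith)]
  positivity

lemma log_discrBound_le (hp : 2 ≤ p) (hd : 0 ≤ d) (hD : 1 ≤ D) :
    log (discrBound p d D) ≤
      (2 * d * p ^ 2 + d ^ 2 * p ^ 4 / 8) * log p + p ^ 2 / 2 * log D := by
  have hp0 : 0 < p := by linarith
  have hq : 0 ≤ p - 1 := by linarith
  have hqp : p - 1 ≤ p := by linarith
  have hL : 0 ≤ log p := log_nonneg (by linarith)
  have hl : 0 ≤ log D := log_nonneg hD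
  calc log (discrBound p d D)
      = d * p * (p - 1) * (log 2 + log p) +
          d ^ 2 * (p - 1) ^ 4 / 8 * log p + (p - 1) ^ 2 / 2 * log D :=
        log_discrBound hp0 (by linarith)
    _ ≤ d * p * p * (log p + log p) + d ^ 2 * p ^ 4 / 8 * log p + p ^ 2 / 2 * log D := by
        gcongr
    _ = (2 * d * p ^ 2 + d ^ 2 * p ^ 4 / 8) * log p + p ^ 2 / 2 * log D := by ring

lemma four_mul_cube_add_le_pow_six (hp : 2 ≤ p) :
    4 * p ^ 3 + p ^ 5 / 4 + p ^ 2 / 2 ≤ p ^ 6 := by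
  have h : p ^ 6 - (4 * p ^ 3 + p ^ 5 / 4 + p ^ 2 / 2) =
      p ^ 2 * ((p - 2) * (p ^ 3 + 7 / 4 * p ^ 2 + 7 / 2 * p + 3) + 11 / 2) := by ring
  have : 0 ≤ p - 2 := by linarith
  rw [← sub_nonneg, h]
  positivity

lemma log_discrBound_le_mul_pow_six (hp : 2 ≤ p) (hd : 1 ≤ d) (hD : 1 ≤ D) :
    log (discrBound p d D) ≤ d ^ 2 * log (D + 1) * p ^ 6 := by
  have hdd : d ≤ d ^ 2 := le_self_pow₀ hd two_ne_zero
  have hp0 : 0 < p := by linarith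
  have hL : 0 ≤ log p := log_nonneg (by linarith)
  have hM : 1 ≤ 2 * log (D + 1) := by linarith [log_two_le_log_add_one hD, log_two_gt_d9]
  have hlM : log D ≤ d ^ 2 * log (D + 1) :=
    (log_le_log (by linarith) (by linarith)).trans
      (le_mul_of_one_le_left (by linarith) (one_le_pow₀ hd))
  calc log (discrBound p d D)
      ≤ (2 * d * p ^ 2 + d ^ 2 * p ^ 4 / 8) * log p + p ^ 2 / 2 * log D :=
        log_discrBound_le hp (by linarith) hD
    _ ≤ (2 * d ^ 2 * p ^ 2 + d ^ 2 * p ^ 4 / 8) * (p * (2 * log (D + 1))) +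
          p ^ 2 / 2 * (d ^ 2 * log (D + 1)) := by
        gcongr
        exact (log_le_self hp0.le).trans (le_mul_of_one_le_right hp0.le hM)
    _ = d ^ 2 * log (D + 1) * (4 * p ^ 3 + p ^ 5 / 4 + p ^ 2 / 2) := by ring
    _ ≤ d ^ 2 * log (D + 1) * p ^ 6 :=
        mul_le_mul_of_nonneg_left (four_mul_cube_add_le_pow_six hp)
          (sq_mul_log_add_one_pos hd hD).le

lemma log_log_discrBound_le (hp : 2 ≤ p) (hd : 1 ≤ d) (hD : 1 ≤ D) :
    log (log (discrBound p d D)) ≤ log (d ^ 2 * log (D + 1)) + 6 * log p := by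
  calc log (log (discrBound p d D))
      ≤ log (d ^ 2 * log (D + 1) * p ^ 6) :=
        log_le_log (log_discrBound_pos (by linarith) (by linarith) hD)
          (log_discrBound_le_mul_pow_six hp hd hD)
    _ = log (d ^ 2 * log (D + 1)) + 6 * log p := by
        rw [log_mul (sq_mul_log_add_one_pos hd hD).ne' (by positivity), log_pow, Nat.cast_ofNat]

lemma delta_pos (hp : 1 < p) (hd : 0 < d) (hD : 1 ≤ D) (hP : 0 < P) : 0 < delta p d D P := by
  have hB := discrBound_pos (d := d) (zero_lt_one.trans hp) (zero_lt_one.trans_le hD)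
  have hA := log_discrBound_pos hp hd hD
  unfold delta; positivity

lemma log_delta (hp : 1 < p) (hd : 0 < d) (hD : 1 ≤ D) (hP : 0 < P) :
    log (delta p d D P) = log (discrBound p d D) / 2 +
      (p - 1) ^ 2 / 2 * (d * log (log (discrBound p d D)) + log P) := by
  have hB := discrBound_pos (d := d) (zero_lt_one.trans hp) (zero_lt_one.trans_le hD)
  have hA := log_discrBound_pos hp hd hD
  rw [delta, log_mul (by positivity) (by positivity), log_mul (by positivity) (by positivity),
    log_rpow hB, log_rpow hA, log_rpow hP]
  ring

lemma log_delta_le (hp : 2 ≤ p) (hd : 1 ≤ d) (hD : 1 ≤ D) (hP : 0 < P) :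
    log (delta p d D P) ≤ (4 * d * p ^ 2 + d ^ 2 * p ^ 4 / 16) * log p + p ^ 2 / 4 * log D +
      (p - 1) ^ 2 / 2 * (d * log (d ^ 2 * log (D + 1)) + log P) := by
  have hq : 0 ≤ p - 1 := by linarith
  have hL : 0 ≤ log p := log_nonneg (by linarith)
  have hcost : (p - 1) ^ 2 * (3 * d * log p) ≤ p ^ 2 * (3 * d * log p) := by
    gcongr; linarith
  calc log (delta p d D P)
      = log (discrBound p d D) / 2 +
          (p - 1) ^ 2 / 2 * (d * log (log (discrBound p d D)) + log P) :=
        log_delta (by linarith) (by linarith) hD hP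
    _ ≤ ((2 * d * p ^ 2 + d ^ 2 * p ^ 4 / 8) * log p + p ^ 2 / 2 * log D) / 2 +
          (p - 1) ^ 2 / 2 * (d * (log (d ^ 2 * log (D + 1)) + 6 * log p) + log P) := by
        gcongr
        · exact log_discrBound_le hp (by linarith) hD
        · exact log_log_discrBound_le hp hd hD
    _ ≤ _ := by linarith

lemma neg_three_mul_log_two_le_log_add_log (hd : 1 ≤ d) (hds : d ≤ 2 * s) (hD : 1 ≤ D)
    (hP : log 2 ^ s ≤ P) :
    -(3 * s * log 2) ≤ d * log (d ^ 2 * log (D + 1)) + log P := by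
  have hX : d * -log 2 ≤ d * log (d ^ 2 * log (D + 1)) := by
    gcongr; exact neg_log_two_le_log_sq_mul_log_add_one hd hD
  have hlP := neg_mul_log_two_le_log_of_rpow_le (by linarith) hP
  have hds2 : d * log 2 ≤ 2 * s * log 2 := by gcongr
  linarith

lemma half_sq_sub_one_mul_le_sq_mul_add {y c : ℝ} (hp : 1 ≤ p) (hc : 0 ≤ c) (hy : -c ≤ y) :
    (p - 1) ^ 2 / 2 * y ≤ p ^ 2 * (y + c) := by
  calc (p - 1) ^ 2 / 2 * y ≤ (p - 1) ^ 2 / 2 * (y + c) := by gcongr; linarith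
    _ ≤ p ^ 2 * (y + c) := by
        have : 0 ≤ y + c := by linarith
        gcongr
        nlinarith

lemma coeff_log_le_seven_mul_sq_mul_pow_four (hp : 2 ≤ p) (hd : 1 ≤ d) (hds : d ≤ 2 * s) :
    4 * d * p ^ 2 + d ^ 2 * p ^ 4 / 16 + 3 * s * p ^ 2 ≤ 7 * s ^ 2 * p ^ 4 := by
  have hs : s ≤ 2 * s ^ 2 := by nlinarith
  have hp2 : 4 * p ^ 2 ≤ p ^ 4 :=
    calc 4 * p ^ 2 ≤ p ^ 2 * p ^ 2 := by gcongr; nlinarith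
      _ = p ^ 4 := by ring
  have hsp : s * (4 * p ^ 2) ≤ 2 * s ^ 2 * p ^ 4 := by gcongr
  calc 4 * d * p ^ 2 + d ^ 2 * p ^ 4 / 16 + 3 * s * p ^ 2
      ≤ 4 * (2 * s) * p ^ 2 + (2 * s) ^ 2 * p ^ 4 / 16 + 3 * s * p ^ 2 := by gcongr
    _ ≤ 7 * s ^ 2 * p ^ 4 := by nlinarith [sq_nonneg (s * p ^ 2)]

lemma log_delta_le_of_rpow_le (hp : 2 ≤ p) (hd : 1 ≤ d) (hds : d ≤ 2 * s) (hD : 1 ≤ D)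
    (hP : log 2 ^ s ≤ P) :
    log (delta p d D P) ≤
      7 * s ^ 2 * p ^ 4 * log p + p ^ 2 * (d * log (d ^ 2 * log (D + 1)) + log D + log P) := by
  have hs : 0 ≤ s := by linarith
  have hP0 : 0 < P := (rpow_pos_of_pos (log_pos one_lt_two) s).trans_le hP
  have hL : 0 ≤ log p := log_nonneg (by linarith)
  have hl : 0 ≤ p ^ 2 * log D := mul_nonneg (sq_nonneg p) (log_nonneg hD)
  set Y := d * log (d ^ 2 * log (D + 1)) + log P with hY
  have hYlower : -(3 * s * log p) ≤ Y := by
    refine le_trans ?_ (neg_three_mul_log_two_le_log_add_log hd hds hD hP)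
    gcongr
  calc log (delta p d D P)
      ≤ (4 * d * p ^ 2 + d ^ 2 * p ^ 4 / 16) * log p + p ^ 2 / 4 * log D +
          (p - 1) ^ 2 / 2 * Y := log_delta_le hp hd hD hP0
    _ ≤ (4 * d * p ^ 2 + d ^ 2 * p ^ 4 / 16) * log p + p ^ 2 * log D +
          p ^ 2 * (Y + 3 * s * log p) :=
        add_le_add (by linarith)
          (half_sq_sub_one_mul_le_sq_mul_add (by linarith) (by positivity) hYlower)
    _ = (4 * d * p ^ 2 + d ^ 2 * p ^ 4 / 16 + 3 * s * p ^ 2) * log p +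
          p ^ 2 * (log D + Y) := by ring
    _ ≤ 7 * s ^ 2 * p ^ 4 * log p + p ^ 2 * (log D + Y) := by
        gcongr; exact coeff_log_le_seven_mul_sq_mul_pow_four hp hd hds
    _ = _ := by rw [hY]; ring

theorem delta_le_general (hp : 2 ≤ p) (hd : 1 ≤ d) (hds : d ≤ 2 * s) (hD : 1 ≤ D)
    (hP : log 2 ^ s ≤ P) :
    delta p d D P ≤
      exp (7 * s ^ 2 * p ^ 4 * log p) * ((d ^ 2 * log (D + 1)) ^ d * D * P) ^ (p ^ 2) := by
  have hP0 : 0 < P := (rpow_pos_of_pos (log_pos one_lt_two) s).trans_le hP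
  have hM := sq_mul_log_add_one_pos hd hD
  have hlog : log ((d ^ 2 * log (D + 1)) ^ d * D * P) =
      d * log (d ^ 2 * log (D + 1)) + log D + log P := by
    rw [log_mul (by positivity) hP0.ne', log_mul (by positivity) (by positivity), log_rpow hM]
  rw [← log_le_log_iff (delta_pos (by linarith) (by linarith) hD hP0) (by positivity),
    log_mul (exp_pos _).ne' (by positivity), log_exp, log_rpow (by positivity), hlog]
  exact log_delta_le_of_rpow_le hp hd hds hD hP

end

/-- the estimate `Δ(p) ≤ e^{7s²p⁴ log p}·((d²·log(D+1))^d·D·P)^{p²}` from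
the proof of the main theorem, where `D* = p^{d²(p-1)³/8}·D^{(p-1)/2}` and
`Δ(p) = ((2p)^{dp(p-1)}·(D*)^{p-1})^{1/2}·(log((2p)^{dp(p-1)}·(D*)^{p-1}))^{d(p-1)²/2}·P^{(p-1)²/2}`. -/
theorem delta_le (p d s : ℕ) (hp : 11 ≤ p) (hd : 0 < d) (hs : 0 < s) (hds : d ≤ 2 * s)
    (D P : ℝ) (hD : 1 ≤ D) (hP : (Real.log 2) ^ s ≤ P)
    (Dstar Δ : ℝ)
    (hDstar : Dstar =
      (p : ℝ) ^ ((d : ℝ) ^ 2 * ((p : ℝ) - 1) ^ 3 / 8) * D ^ (((p : ℝ) - 1) / 2))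
    (hΔ : Δ =
      ((2 * (p : ℝ)) ^ ((d : ℝ) * (p : ℝ) * ((p : ℝ) - 1)) * Dstar ^ ((p : ℝ) - 1)) ^
          ((1 : ℝ) / 2) *
        Real.log ((2 * (p : ℝ)) ^ ((d : ℝ) * (p : ℝ) * ((p : ℝ) - 1)) *
            Dstar ^ ((p : ℝ) - 1)) ^ ((d : ℝ) * ((p : ℝ) - 1) ^ 2 / 2) *
        P ^ (((p : ℝ) - 1) ^ 2 / 2)) :
    Δ ≤ Real.exp (7 * (s : ℝ) ^ 2 * (p : ℝ) ^ 4 * Real.log p) *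
        (((d : ℝ) ^ 2 * Real.log (D + 1)) ^ d * D * P) ^ (p ^ 2) := by
  rw [hΔ, hDstar, ← Real.rpow_natCast _ (p ^ 2), ← Real.rpow_natCast _ d, Nat.cast_pow]
  exact delta_le_general (mod_cast (by lia : 2 ≤ p)) (mod_cast hd) (mod_cast hds) hD (mod_cast hP)
end
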